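/- Under assumptions (I1)–(I4), let (λ^k)_k be a sequence in (λ_n, λ_{n+1}) converging to some λ ∈ (λ_n, λ_{n+1}), and let (w_k)_k be a sequence in E_n^⊥ with ‖w_k‖_E = 1 for all k and sup_k sup_{F_n(w_k)⁺} J_{λ^k} < ∞. Then, after passing to a subsequence, w_k ⇀ w weakly in E for some w ∈ E_n^⊥∖{0}, and sup_{F_n(w)⁺} J_λ ≤ liminf_{k→∞} sup_{F_n(w_k)⁺} J_{λ^k}. -/

import Mathlib

open Filter Topology Set
open scoped InnerProductSpace

/- Abstract setting: `E = D(A^{1/2})` is a real Hilbert space in which the rescaled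
eigenfunctions `ζ_k / √(1+λ_k)` form a Hilbert basis (encoded by `hON` and `hdense` below);
the `H`-inner product of `u, v ∈ E` is recovered as `∑ₖ ⟨u,ζ_k⟩_H ⟨v,ζ_k⟩_H`, where
`⟨u,ζ_k⟩_H = ⟨u,ζ_k⟩_E / (1+λ_k)`. -/

variable {E : Type*} [NormedAddCommGroup E] [InnerProductSpace ℝ E] [CompleteSpace E]

/-- The `H`-inner-product coefficient `⟨u, ζ_k⟩_H = ⟨u, ζ_k⟩_E / (1 + λ_k)`. -/
noncomputable def coefH (lam : ℕ → ℝ) (ζ : ℕ → E) (u : E) (k : ℕ) : ℝ :=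
  ⟪u, ζ k⟫_ℝ / (1 + lam k)

/-- The square of the `H`-norm: `‖u‖_H² = ∑ₖ ⟨u,ζ_k⟩_H²`. -/
noncomputable def normHsq (lam : ℕ → ℝ) (ζ : ℕ → E) (u : E) : ℝ :=
  ∑' k, (coefH lam ζ u k) ^ 2

/-- The symmetric bilinear form `q_λ(u,v) = ∑ₖ (λ_k − λ) ⟨u,ζ_k⟩_H ⟨v,ζ_k⟩_H`. -/
noncomputable def qForm (lam : ℕ → ℝ) (ζ : ℕ → E) (lambda : ℝ) (u v : E) : ℝ :=
  ∑' k, (lam k - lambda) * (coefH lam ζ u k * coefH lam ζ v k)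

/-- The action functional `J_λ(u) = ½ q_λ(u) − I(u)`. -/
noncomputable def Jfun (lam : ℕ → ℝ) (ζ : ℕ → E) (I : E → ℝ) (lambda : ℝ) (u : E) : ℝ :=
  qForm lam ζ lambda u u / 2 - I u

/-- `E_n`, the span of the eigenfunctions `ζ_0, …, ζ_n` (the first `n+1` of them). -/
noncomputable def Esub (ζ : ℕ → E) (n : ℕ) : Submodule ℝ E :=
  Submodule.span ℝ (ζ '' {k : ℕ | k ≤ n})

/-- `F_n(u) = E_n ⊕ ℝ u`. -/
noncomputable def Fsub (ζ : ℕ → E) (n : ℕ) (u : E) : Submodule ℝ E :=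
  Esub ζ n ⊔ Submodule.span ℝ {u}

/-- `F_n(u)⁺ = E_n ⊕ ℝ⁺ u = {v + t u : v ∈ E_n, t > 0}`. -/
def FsubPlus (ζ : ℕ → E) (n : ℕ) (u : E) : Set E :=
  {w | ∃ v ∈ Esub ζ n, ∃ t : ℝ, 0 < t ∧ w = v + t • u}

/-- The derivative of `J_λ` at `u` applied to `w`: `J_λ'(u)[w] = q_λ(u,w) − I'(u)[w]`. -/
noncomputable def Jderiv (lam : ℕ → ℝ) (ζ : ℕ → E) (I' : E → E →L[ℝ] ℝ)
    (lambda : ℝ) (u w : E) : ℝ :=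
  qForm lam ζ lambda u w - I' u w

/-- The Nehari–Pankov set `NP_λ = {u ∈ E ∖ E_n : J_λ'(u)|_{F_n(u)} = 0}`. -/
def NehariPankov (lam : ℕ → ℝ) (ζ : ℕ → E) (I' : E → E →L[ℝ] ℝ)
    (n : ℕ) (lambda : ℝ) : Set E :=
  {u | u ∉ Esub ζ n ∧ ∀ w ∈ Fsub ζ n u, Jderiv lam ζ I' lambda u w = 0}

/-- The ground-state level `c_λ = inf_{NP_λ} J_λ`. -/
noncomputable def clevel (lam : ℕ → ℝ) (ζ : ℕ → E) (I : E → ℝ) (I' : E → E →L[ℝ] ℝ)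
    (n : ℕ) (lambda : ℝ) : ℝ :=
  sInf (Jfun lam ζ I lambda '' NehariPankov lam ζ I' n lambda)

/-- The set `Q_λ` of minimizers of `J_λ` on `NP_λ`. -/
def Qset (lam : ℕ → ℝ) (ζ : ℕ → E) (I : E → ℝ) (I' : E → E →L[ℝ] ℝ)
    (n : ℕ) (lambda : ℝ) : Set E :=
  {u | u ∈ NehariPankov lam ζ I' n lambda ∧
    Jfun lam ζ I lambda u = clevel lam ζ I I' n lambda}

/-- `E_n^⊥ = {w ∈ E : ⟨w, ζ_k⟩_H = 0 for k = 0, …, n}`. -/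
def EsubPerp (lam : ℕ → ℝ) (ζ : ℕ → E) (n : ℕ) : Set E :=
  {w | ∀ k ≤ n, coefH lam ζ w k = 0}

lemma aux_hasSum (lam : ℕ → ℝ) (ζ : ℕ → E) (hlam_nonneg : ∀ k, 0 ≤ lam k)
    (hON : ∀ j k, ⟪ζ j, ζ k⟫_ℝ = if j = k then 1 + lam k else 0)
    (hdense : (Submodule.span ℝ (Set.range ζ)).topologicalClosure = ⊤) (u : E) :
    HasSum (fun k => (1 + lam k) * (coefH lam ζ u k) ^ 2) (‖u‖ ^ 2) := by
  have hpos : ∀ k, 0 < 1 + lam k := fun k => by linarith [hlam_nonneg k]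
  have hspos : ∀ k, 0 < √(1 + lam k) := fun k => Real.sqrt_pos.2 (hpos k)
  have hsq : ∀ k, √(1 + lam k) * √(1 + lam k) = 1 + lam k := fun k =>
    Real.mul_self_sqrt (hpos k).le
  let e : ℕ → E := fun k => (√(1 + lam k))⁻¹ • ζ k
  have he : Orthonormal ℝ e := by
    rw [orthonormal_iff_ite]
    intro i j
    simp only [e, real_inner_smul_left, real_inner_smul_right, hON]
    split_ifs with h
    · subst h
      have := hspos i
      have h2 := hsq i
      field_simp
      nlinarith
    · simp
  have hsp : ⊤ ≤ (Submodule.span ℝ (Set.range e)).topologicalClosure := by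
    rw [← hdense]
    apply Submodule.topologicalClosure_mono
    rw [Submodule.span_le]
    rintro _ ⟨k, rfl⟩
    have h1 : ζ k = √(1 + lam k) • e k := by
      simp only [e, smul_smul]
      rw [mul_inv_cancel₀ (hspos k).ne', one_smul]
    rw [h1]
    exact Submodule.smul_mem _ _ (Submodule.subset_span ⟨k, rfl⟩)
  have := (HilbertBasis.mk he hsp).hasSum_inner_mul_inner u u
  rw [HilbertBasis.coe_mk, real_inner_self_eq_norm_sq] at this
  convert! this using 2 with k
  simp only [e, real_inner_smul_left, real_inner_smul_right, coefH]
  rw [real_inner_comm (ζ k) u, ← hsq k]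
  have := hspos k
  rw [← hsq k] at *
  field_simp
  try simp [hsq]

lemma aux_summable (lam : ℕ → ℝ) (ζ : ℕ → E) (hlam_nonneg : ∀ k, 0 ≤ lam k)
    (hON : ∀ j k, ⟪ζ j, ζ k⟫_ℝ = if j = k then 1 + lam k else 0)
    (hdense : (Submodule.span ℝ (Set.range ζ)).topologicalClosure = ⊤) (u : E) :
    Summable (fun k => (coefH lam ζ u k) ^ 2) := by
  refine Summable.of_nonneg_of_le (fun k => sq_nonneg _) (fun k => ?_)
    (aux_hasSum lam ζ hlam_nonneg hON hdense u).summable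
  nlinarith [mul_nonneg (hlam_nonneg k) (sq_nonneg (coefH lam ζ u k))]

lemma aux_q (lam : ℕ → ℝ) (ζ : ℕ → E) (hlam_nonneg : ∀ k, 0 ≤ lam k)
    (hON : ∀ j k, ⟪ζ j, ζ k⟫_ℝ = if j = k then 1 + lam k else 0)
    (hdense : (Submodule.span ℝ (Set.range ζ)).topologicalClosure = ⊤) (mu : ℝ) (u : E) :
    qForm lam ζ mu u u = ‖u‖ ^ 2 - (1 + mu) * normHsq lam ζ u := by
  have h1 := aux_hasSum lam ζ hlam_nonneg hON hdense u
  have h2 := (aux_summable lam ζ hlam_nonneg hON hdense u).hasSum.mul_left (1 + mu)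
  have h3 := (h1.sub h2).tsum_eq
  rw [normHsq, ← h3, qForm]
  congr 1
  ext k
  ring

lemma aux_tail (lam : ℕ → ℝ) (ζ : ℕ → E) (hlam_mono : Monotone lam)
    (hlam_nonneg : ∀ k, 0 ≤ lam k)
    (hON : ∀ j k, ⟪ζ j, ζ k⟫_ℝ = if j = k then 1 + lam k else 0)
    (hdense : (Submodule.span ℝ (Set.range ζ)).topologicalClosure = ⊤) (K : ℕ) (u : E) :
    normHsq lam ζ u ≤ ∑ k ∈ Finset.range K, (coefH lam ζ u k) ^ 2
      + (1 + lam K)⁻¹ * ‖u‖ ^ 2 := by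
  have h1 := (aux_hasSum lam ζ hlam_nonneg hON hdense u).mul_left (1 + lam K)⁻¹
  have h2 := (aux_summable lam ζ hlam_nonneg hON hdense u).hasSum
  have h3 : HasSum (fun k => if k ∈ Finset.range K then (coefH lam ζ u k) ^ 2 else 0)
      (∑ k ∈ Finset.range K, if k ∈ Finset.range K then (coefH lam ζ u k) ^ 2 else 0) :=
    hasSum_sum_of_ne_finset_zero (fun b hb => by simp only [if_neg hb])
  rw [Finset.sum_congr rfl (fun k hk => if_pos hk)] at h3
  refine hasSum_le (fun k => ?_) h2 (h3.add h1)
  have hp : 0 < 1 + lam K := by linarith [hlam_nonneg K]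
  have hpk : 0 ≤ 1 + lam k := by linarith [hlam_nonneg k]
  by_cases hk : k ∈ Finset.range K
  · simp only [if_pos hk]
    have : 0 ≤ (1 + lam K)⁻¹ * ((1 + lam k) * coefH lam ζ u k ^ 2) := by positivity
    linarith
  · simp only [if_neg hk, zero_add]
    have hk' : K ≤ k := by simpa using hk
    have := hlam_mono hk'
    rw [inv_mul_eq_div, le_div_iff₀ hp]
    nlinarith [sq_nonneg (coefH lam ζ u k)]

lemma aux_N (lam : ℕ → ℝ) (ζ : ℕ → E) (hlam_mono : Monotone lam)
    (hlam_nonneg : ∀ k, 0 ≤ lam k) (hlam_top : Tendsto lam atTop atTop)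
    (hON : ∀ j k, ⟪ζ j, ζ k⟫_ℝ = if j = k then 1 + lam k else 0)
    (hdense : (Submodule.span ℝ (Set.range ζ)).topologicalClosure = ⊤)
    (u : ℕ → E) (a : E)
    (hu : ∀ φ : E →L[ℝ] ℝ, Tendsto (fun j => φ (u j)) atTop (𝓝 (φ a)))
    (M : ℝ) (hM : ∀ j, ‖u j‖ ≤ M) (ε : ℝ) (hε : 0 < ε) :
    ∀ᶠ j in atTop, normHsq lam ζ (u j) < normHsq lam ζ a + ε := by
  have hinv : Tendsto (fun K => (1 + lam K)⁻¹ * M ^ 2) atTop (𝓝 (0 * M ^ 2)) :=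
    ((tendsto_const_nhds.add_atTop hlam_top).inv_tendsto_atTop).mul_const _
  rw [zero_mul] at hinv
  obtain ⟨K, hK⟩ := (hinv.eventually (gt_mem_nhds (half_pos hε))).exists
  have hc : ∀ k, Tendsto (fun j => coefH lam ζ (u j) k) atTop (𝓝 (coefH lam ζ a k)) := by
    intro k
    have := hu (innerSL ℝ (ζ k))
    simp only [innerSL_apply_apply] at this
    simp only [coefH, real_inner_comm (ζ k)]
    exact this.div_const _
  have hs : Tendsto (fun j => ∑ k ∈ Finset.range K, (coefH lam ζ (u j) k) ^ 2) atTop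
      (𝓝 (∑ k ∈ Finset.range K, (coefH lam ζ a k) ^ 2)) :=
    tendsto_finsetSum _ (fun k _ => (hc k).pow 2)
  have hle : ∑ k ∈ Finset.range K, (coefH lam ζ a k) ^ 2 ≤ normHsq lam ζ a :=
    (aux_summable lam ζ hlam_nonneg hON hdense a).sum_le_tsum _ (fun k _ => sq_nonneg _)
  filter_upwards [hs.eventually (gt_mem_nhds (lt_add_of_pos_right _ (half_pos hε)))] with j hj
  have h1 := aux_tail lam ζ hlam_mono hlam_nonneg hON hdense K (u j)
  have hp : 0 < 1 + lam K := by linarith [hlam_nonneg K]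
  have h2 : (1 + lam K)⁻¹ * ‖u j‖ ^ 2 ≤ (1 + lam K)⁻¹ * M ^ 2 := by
    gcongr
    exact hM j
  linarith

lemma aux_muN (lam : ℕ → ℝ) (ζ : ℕ → E) (hlam_mono : Monotone lam)
    (hlam_nonneg : ∀ k, 0 ≤ lam k) (hlam_top : Tendsto lam atTop atTop)
    (hON : ∀ j k, ⟪ζ j, ζ k⟫_ℝ = if j = k then 1 + lam k else 0)
    (hdense : (Submodule.span ℝ (Set.range ζ)).topologicalClosure = ⊤)
    (u : ℕ → E) (a : E)
    (hu : ∀ φ : E →L[ℝ] ℝ, Tendsto (fun j => φ (u j)) atTop (𝓝 (φ a)))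
    (M : ℝ) (hM : ∀ j, ‖u j‖ ≤ M) (mu : ℝ) (hmu : 0 ≤ mu) (mus : ℕ → ℝ)
    (hmus : ∀ j, 0 ≤ mus j) (hmut : Tendsto mus atTop (𝓝 mu)) (ε : ℝ) (hε : 0 < ε) :
    ∀ᶠ j in atTop, (1 + mus j) * normHsq lam ζ (u j) < (1 + mu) * normHsq lam ζ a + ε := by
  have hd : 0 < ε / 2 / (1 + mu) := by positivity
  have h1 : Tendsto (fun j => (1 + mus j) * (normHsq lam ζ a + ε / 2 / (1 + mu))) atTop
      (𝓝 ((1 + mu) * (normHsq lam ζ a + ε / 2 / (1 + mu)))) :=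
    (hmut.const_add 1).mul_const _
  have h2 : (1 + mu) * (normHsq lam ζ a + ε / 2 / (1 + mu))
      = (1 + mu) * normHsq lam ζ a + ε / 2 := by
    field_simp
  rw [h2] at h1
  filter_upwards [aux_N lam ζ hlam_mono hlam_nonneg hlam_top hON hdense u a hu M hM _ hd,
    h1.eventually (gt_mem_nhds (show _ < (1 + mu) * normHsq lam ζ a + ε by linarith))]
    with j hj1 hj2
  have := hmus j
  nlinarith

lemma aux_normlsc (u : ℕ → E) (a : E)
    (hu : ∀ φ : E →L[ℝ] ℝ, Tendsto (fun j => φ (u j)) atTop (𝓝 (φ a)))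
    (ε : ℝ) (hε : 0 < ε) : ∀ᶠ j in atTop, ‖a‖ ^ 2 - ε < ‖u j‖ ^ 2 := by
  have := hu (innerSL ℝ a)
  simp only [innerSL_apply_apply, real_inner_self_eq_norm_sq] at this
  filter_upwards [this.eventually (lt_mem_nhds (show ‖a‖ ^ 2 - ε / 2 < ‖a‖ ^ 2 by linarith))]
    with j hj
  have h := norm_sub_sq_real a (u j)
  nlinarith [sq_nonneg ‖a - u j‖]

lemma aux_seqcompact (ζ : ℕ → E)
    (hdense : (Submodule.span ℝ (Set.range ζ)).topologicalClosure = ⊤)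
    (w : ℕ → E) (hw : ∀ k, ‖w k‖ = 1) :
    ∃ φ : ℕ → ℕ, StrictMono φ ∧ ∃ a : E,
      ∀ ψ : E →L[ℝ] ℝ, Tendsto (fun k => ψ (w (φ k))) atTop (𝓝 (ψ a)) := by
  have hsep : TopologicalSpace.SeparableSpace E := by
    have h1 : TopologicalSpace.IsSeparable (Set.range ζ) :=
      (Set.countable_range ζ).isSeparable
    have h2 := (h1.span (R := ℝ)).closure
    rw [← Submodule.topologicalClosure_coe, hdense] at h2
    exact TopologicalSpace.isSeparable_univ_iff.1 h2
  have hc := WeakDual.isSeqCompact_closedBall ℝ E (0 : StrongDual ℝ E) 1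
  obtain ⟨f, -, φ, hφ, hf⟩ := hc (x := fun k => StrongDual.toWeakDual (InnerProductSpace.toDual ℝ E (w k)))
    (fun k => by
      simp [hw k])
  refine ⟨φ, hφ, (InnerProductSpace.toDual ℝ E).symm (WeakDual.toStrongDual f), fun ψ => ?_⟩
  rw [tendsto_iff_forall_eval_tendsto_topDualPairing] at hf
  have h := hf ((InnerProductSpace.toDual ℝ E).symm ψ)
  have e1 : ∀ x : E, ψ x = ⟪x, (InnerProductSpace.toDual ℝ E).symm ψ⟫_ℝ := by
    intro x
    rw [real_inner_comm, InnerProductSpace.toDual_symm_apply]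
  simp only [e1, InnerProductSpace.toDual_symm_apply]
  exact h

/-- Weak compactness: if `λ^k → λ` in the gap, `w_k ∈ E_n^⊥` with
`‖w_k‖_E = 1` and the suprema `sup_{F_n(w_k)⁺} J_{λ^k}` are uniformly bounded, then along a
subsequence `w_k ⇀ w ∈ E_n^⊥ ∖ {0}` weakly in `E`, and
`sup_{F_n(w)⁺} J_λ ≤ liminf_k sup_{F_n(w_k)⁺} J_{λ^k}`. -/
theorem weak_compactness_of_half_space_suprema {E : Type*} [NormedAddCommGroup E]
    [InnerProductSpace ℝ E] [CompleteSpace E]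
    (lam : ℕ → ℝ) (ζ : ℕ → E)
    (hlam_mono : Monotone lam) (hlam_nonneg : ∀ k, 0 ≤ lam k)
    (hlam_top : Tendsto lam atTop atTop)
    (hON : ∀ j k, ⟪ζ j, ζ k⟫_ℝ = if j = k then 1 + lam k else 0)
    (hdense : (Submodule.span ℝ (Set.range ζ)).topologicalClosure = ⊤)
    (I : E → ℝ) (I' : E → E →L[ℝ] ℝ)
    (hIderiv : ∀ u, HasFDerivAt I (I' u) u) (hIderiv_cont : Continuous I')
    (hI1 : ∀ (u : ℕ → E) (a : E),
      (∀ φ : E →L[ℝ] ℝ, Tendsto (fun j => φ (u j)) atTop (𝓝 (φ a))) →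
      Tendsto (fun j => I (u j)) atTop (𝓝 (I a)))
    (hI2 : I 0 = 0 ∧ ∀ u : E, u ≠ 0 → 0 < I u)
    (hI3mono : ∀ u : E, u ≠ 0 → MonotoneOn (fun t : ℝ => I (t • u) / t ^ 2) (Ioi 0))
    (hI3zero : ∀ u : E, u ≠ 0 → Tendsto (fun t : ℝ => I (t • u) / t ^ 2) (𝓝[>] 0) (𝓝 0))
    (hI3top : ∀ u : E, u ≠ 0 → Tendsto (fun t : ℝ => I (t • u) / t ^ 2) atTop atTop)
    (hI4 : ∀ u : E, u ≠ 0 → ∀ v : E, ∀ s : ℝ, -1 ≤ s →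
      I u - I ((1 + s) • u + v) + I' u ((s * (s / 2 + 1)) • u + (1 + s) • v) ≤ 0)
    (hI4strict : ∀ u : E, u ≠ 0 → ∀ s : ℝ, -1 ≤ s → s ≠ 0 →
      I u - I ((1 + s) • u) + I' u ((s * (s / 2 + 1)) • u) < 0)
    (n : ℕ)
    (lambda : ℝ) (hlambda : lambda ∈ Ioo (lam n) (lam (n + 1)))
    (lamseq : ℕ → ℝ) (hlamseq : ∀ k, lamseq k ∈ Ioo (lam n) (lam (n + 1)))
    (hlamseq_tendsto : Tendsto lamseq atTop (𝓝 lambda))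
    (w : ℕ → E) (hwperp : ∀ k, w k ∈ EsubPerp lam ζ n) (hwnorm : ∀ k, ‖w k‖ = 1)
    (hbdd : ∃ C : ℝ, ∀ k, ∀ x ∈ FsubPlus ζ n (w k), Jfun lam ζ I (lamseq k) x ≤ C) :
    ∃ φ : ℕ → ℕ, StrictMono φ ∧ ∃ w₀ : E, w₀ ∈ EsubPerp lam ζ n ∧ w₀ ≠ 0 ∧
      (∀ ψ : E →L[ℝ] ℝ, Tendsto (fun k => ψ (w (φ k))) atTop (𝓝 (ψ w₀))) ∧
      sSup (Jfun lam ζ I lambda '' FsubPlus ζ n w₀) ≤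
        Filter.liminf (fun k => sSup (Jfun lam ζ I (lamseq k) '' FsubPlus ζ n (w k)))
          atTop := by
  obtain ⟨C, hC⟩ := hbdd
  have hq := aux_q lam ζ hlam_nonneg hON hdense
  have hJ : ∀ mu u, Jfun lam ζ I mu u = (‖u‖ ^ 2 - (1 + mu) * normHsq lam ζ u) / 2 - I u := by
    intro mu u
    rw [Jfun, hq]
  have hlpos : ∀ k, 0 ≤ lamseq k := fun k => (hlam_nonneg n).trans (hlamseq k).1.le
  have hlpos0 : 0 ≤ lambda := (hlam_nonneg n).trans hlambda.1.le
  set S : ℕ → ℝ := fun k => sSup (Jfun lam ζ I (lamseq k) '' FsubPlus ζ n (w k)) with hS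
  have hbdd : ∀ k, BddAbove (Jfun lam ζ I (lamseq k) '' FsubPlus ζ n (w k)) := by
    rintro k
    refine ⟨C, ?_⟩
    rintro _ ⟨x, hx, rfl⟩
    exact hC k x hx
  have hleS : ∀ k, ∀ v ∈ Esub ζ n, ∀ t : ℝ, 0 < t →
      Jfun lam ζ I (lamseq k) (v + t • w k) ≤ S k := fun k v hv t ht =>
    le_csSup (hbdd k) ⟨_, ⟨v, hv, t, ht, rfl⟩, rfl⟩
  have hmem0 : (0 : E) ∈ Esub ζ n := Submodule.zero_mem _
  have hSC : ∀ k, S k ≤ C := by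
    intro k
    refine csSup_le ⟨_, ⟨_, ⟨0, hmem0, 1, one_pos, rfl⟩, rfl⟩⟩ ?_
    rintro _ ⟨x, hx, rfl⟩
    exact hC k x hx
  have hIcont : Continuous I :=
    continuous_iff_continuousAt.2 (fun u => (hIderiv u).continuousAt)
  have hNsmul : ∀ (t : ℝ) (u : E), normHsq lam ζ (t • u) = t ^ 2 * normHsq lam ζ u := by
    intro t u
    simp only [normHsq]
    rw [← tsum_mul_left]
    congr 1
    ext k
    simp only [coefH, real_inner_smul_left]
    ring
  have hS0 : ∀ k, 0 ≤ S k := by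
    intro k
    have hcont : Continuous (fun t : ℝ => (t ^ 2 * ‖w k‖ ^ 2
        - (1 + lamseq k) * (t ^ 2 * normHsq lam ζ (w k))) / 2 - I (t • w k)) := by
      fun_prop
    have h1 := (hcont.tendsto 0).mono_left (nhdsWithin_le_nhds (s := Ioi 0))
    simp only [zero_smul, hI2.1] at h1
    have h2 := le_of_tendsto h1 (b := S k) (by
      filter_upwards [self_mem_nhdsWithin] with t ht
      have := hleS k 0 hmem0 t ht
      rw [zero_add, hJ, hNsmul, norm_smul, mul_pow, Real.norm_eq_abs, sq_abs] at this
      exact this)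
    simpa using h2
  set L := Filter.liminf S atTop with hL
  have hfreq : ∀ m : ℕ, ∃ᶠ k in atTop, S k < L + 1 / ((m : ℝ) + 1) := by
    intro m
    refine frequently_lt_of_liminf_lt ?_ ?_
    · exact (isBoundedUnder_of ⟨C, hSC⟩ : IsBoundedUnder (· ≤ ·) atTop S).isCoboundedUnder_ge
    · have : 0 < 1 / ((m : ℝ) + 1) := by positivity
      linarith
  obtain ⟨φ₁, hφ₁, hφ₁S⟩ := extraction_forall_of_frequently hfreq
  obtain ⟨φ₂, hφ₂, w₀, hw₀⟩ := aux_seqcompact ζ hdense (fun k => w (φ₁ k)) (fun k => hwnorm _)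
  have hφ : StrictMono (fun k => φ₁ (φ₂ k)) := hφ₁.comp hφ₂
  have hlt : Tendsto (fun k => lamseq (φ₁ (φ₂ k))) atTop (𝓝 lambda) :=
    hlamseq_tendsto.comp hφ.tendsto_atTop
  have hweak : ∀ (v : E) (t : ℝ) (ψ : E →L[ℝ] ℝ),
      Tendsto (fun k => ψ (v + t • w (φ₁ (φ₂ k)))) atTop (𝓝 (ψ (v + t • w₀))) := by
    intro v t ψ
    simp only [map_add, map_smul]
    exact ((hw₀ ψ).const_smul t).const_add _
  have hbd : ∀ (v : E) (t : ℝ) (k : ℕ), ‖v + t • w (φ₁ (φ₂ k))‖ ≤ ‖v‖ + |t| := by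
    intro v t k
    refine (norm_add_le _ _).trans ?_
    rw [norm_smul, hwnorm, mul_one, Real.norm_eq_abs]
  refine ⟨fun k => φ₁ (φ₂ k), hφ, w₀, ?_, ?_, hw₀, ?_⟩
  · intro j hj
    have h1 := hw₀ (innerSL ℝ (ζ j))
    have h2 : ∀ k, (innerSL ℝ (ζ j)) (w k) = 0 := by
      intro k
      have h3 := hwperp k j hj
      rw [coefH, div_eq_zero_iff] at h3
      rw [innerSL_apply_apply, real_inner_comm]
      rcases h3 with h3 | h3
      · exact h3
      · linarith [hlam_nonneg j]
    simp only [h2] at h1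
    have h4 := tendsto_nhds_unique h1 tendsto_const_nhds
    rw [innerSL_apply_apply, real_inner_comm] at h4
    rw [coefH, h4, zero_div]
  · rintro rfl
    -- J (t w_k) tends to t^2/2, contradiction for large t
    have hC0 : 0 ≤ C := (hS0 0).trans (hSC 0)
    set t : ℝ := 2 * C + 4 with ht
    have htpos : 0 < t := by linarith
    have hA := aux_muN lam ζ hlam_mono hlam_nonneg hlam_top hON hdense _ _ (hweak 0 t) _
      (hbd 0 t) lambda hlpos0 _ (fun k => hlpos (φ₁ (φ₂ k))) hlt 1 one_pos
    have hB := (hI1 _ _ (hweak 0 t)).eventually (gt_mem_nhds (lt_add_of_pos_right _ one_pos))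
    obtain ⟨k, hk1, hk2⟩ := (hA.and hB).exists
    have h1 := (hleS (φ₁ (φ₂ k)) 0 hmem0 t htpos).trans (hSC _)
    have hN0 : normHsq lam ζ (0 : E) = 0 := by
      simp [normHsq, coefH]
    rw [hJ] at h1
    rw [smul_zero, add_zero, hN0] at hk1
    rw [smul_zero, add_zero, hI2.1] at hk2
    have h2 : ‖(0 : E) + t • w (φ₁ (φ₂ k))‖ ^ 2 = t ^ 2 := by
      rw [zero_add, norm_smul, hwnorm, mul_one, Real.norm_eq_abs, sq_abs]
    rw [h2] at h1
    nlinarith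
  · refine csSup_le ⟨_, ⟨_, ⟨0, hmem0, 1, one_pos, rfl⟩, rfl⟩⟩ ?_
    rintro _ ⟨_, ⟨v, hv, t, ht, rfl⟩, rfl⟩
    refine le_of_forall_pos_le_add (fun ε hε => ?_)
    have he : 0 < ε / 3 := by positivity
    have hA := aux_muN lam ζ hlam_mono hlam_nonneg hlam_top hON hdense _ _ (hweak v t) _
      (hbd v t) lambda hlpos0 _ (fun k => hlpos (φ₁ (φ₂ k))) hlt _ he
    have hB := (hI1 _ _ (hweak v t)).eventually (gt_mem_nhds (lt_add_of_pos_right _ he))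
    have hD := aux_normlsc _ _ (hweak v t) _ he
    have hF : ∀ᶠ k in atTop, 1 / ((φ₂ k : ℝ) + 1) < ε / 3 :=
      ((tendsto_one_div_add_atTop_nhds_zero_nat (𝕜 := ℝ)).comp
        hφ₂.tendsto_atTop).eventually (gt_mem_nhds he)
    obtain ⟨k, ⟨⟨hk1, hk2⟩, hk3⟩, hk4⟩ := (((hA.and hB).and hD).and hF).exists
    have h1 := hleS (φ₁ (φ₂ k)) v hv t ht
    have h2 := hφ₁S (φ₂ k)
    rw [hJ] at h1 ⊢
    linarith
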